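/- For all nonzero integers n, m and all x, y ∈ SL(2,ℂ), the trace of the commutator of powers satisfies tr(xⁿ·yᵐ·x⁻ⁿ·y⁻ᵐ) = tr(x^{|n|}·y^{|m|}·x^{−|n|}·y^{−|m|}). -/

import Mathlib

open Matrix

abbrev SL2C := Matrix.SpecialLinearGroup (Fin 2) ℂ

noncomputable def tr2 (x : SL2C) : ℂ := Matrix.trace (x : Matrix (Fin 2) (Fin 2) ℂ)

/-!
By Cayley–Hamilton, an invertible `2 × 2` matrix `a` satisfies `a + det a • a⁻¹ = tr a • 1`, so
`s = a + det a • a⁻¹` is central and `tr (a⁻¹ b s b⁻¹) = tr (a⁻¹ s) = tr (s b a⁻¹ b⁻¹)`. Expanding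
`s`, the terms with `det a` on the two sides agree, which leaves `tr ⁅a⁻¹, b⁆ = tr ⁅a, b⁆`. Since
`tr ⁅a⁻¹, b⁆ = tr ⁅b, a⁆` by cyclicity, the trace of the commutator is symmetric in `a` and `b`, and
so it does not change when either of them is inverted.
-/

open scoped MatrixGroups commutatorElement

section GeneralLinearGroup

variable {ι R : Type*} [Fintype ι] [DecidableEq ι] [CommRing R]

theorem trace_commutator_inv_left_swap (a b : GL ι R) :
    ⁅a⁻¹, b⁆.val.trace = ⁅b, a⁆.val.trace := by
  simpa only [commutatorElement_def, inv_inv, Units.val_mul, mul_assoc] using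
    trace_mul_comm a⁻¹.val (b * a * b⁻¹).val

theorem trace_commutator_inv_left_of_commute {a b : GL ι R} {d : R}
    (h : Commute (a.val + d • a⁻¹.val) b.val) :
    ⁅a⁻¹, b⁆.val.trace = ⁅a, b⁆.val.trace := by
  set s : Matrix ι ι R := a.val + d • a⁻¹.val with hs
  have sum_on_right : trace (a⁻¹.val * b.val * s * b⁻¹.val) = trace (a⁻¹.val * s) := by
    rw [mul_assoc a⁻¹.val, ← h.eq, mul_assoc, mul_assoc, Units.mul_inv, mul_one]
  have sum_on_left : trace (s * b.val * a⁻¹.val * b⁻¹.val) = trace (a⁻¹.val * s) := by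
    rw [h.eq, mul_assoc b.val, trace_units_conj, trace_mul_comm]
  have expanded := sum_on_right.trans sum_on_left.symm
  simp only [hs, mul_add, add_mul, mul_smul_comm, smul_mul_assoc, trace_add] at expanded
  simpa only [commutatorElement_def, inv_inv, Units.val_mul] using add_right_cancel expanded

theorem det_smul_coe_inv (a : GL ι R) : a.val.det • a⁻¹.val = adjugate a.val := by
  rw [← a.mul_left_inj, smul_mul_assoc, Units.inv_mul, adjugate_mul]

end GeneralLinearGroup

section FinTwo

variable {R : Type*} [CommRing R]

theorem add_adjugate_fin_two (A : Matrix (Fin 2) (Fin 2) R) :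
    A + adjugate A = trace A • (1 : Matrix (Fin 2) (Fin 2) R) := by
  ext i j
  fin_cases i <;> fin_cases j <;> simp [adjugate_fin_two, trace_fin_two, add_comm]

theorem trace_commutator_inv_left (a b : GL (Fin 2) R) :
    ⁅a⁻¹, b⁆.val.trace = ⁅a, b⁆.val.trace := by
  refine trace_commutator_inv_left_of_commute (d := a.val.det) ?_
  rw [det_smul_coe_inv, add_adjugate_fin_two]
  exact (Commute.one_left b.val).smul_left a.val.trace

theorem trace_commutator_comm (a b : GL (Fin 2) R) :
    ⁅a, b⁆.val.trace = ⁅b, a⁆.val.trace := by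
  rw [← trace_commutator_inv_left, trace_commutator_inv_left_swap]

theorem trace_commutator_zpow_abs_left (n : ℤ) (a b : GL (Fin 2) R) :
    ⁅a ^ |n|, b⁆.val.trace = ⁅a ^ n, b⁆.val.trace := by
  obtain h | h := abs_choice n
  · rw [h]
  · rw [h, _root_.zpow_neg, trace_commutator_inv_left]

theorem trace_commutator_abs_general (n m : ℤ) (x y : GL (Fin 2) R) :
    ⁅x ^ n, y ^ m⁆.val.trace = ⁅x ^ |n|, y ^ |m|⁆.val.trace := by
  rw [trace_commutator_zpow_abs_left, trace_commutator_comm, ← trace_commutator_zpow_abs_left m,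
    trace_commutator_comm]

end FinTwo

/-- `tr ([xⁿ,yᵐ]) = tr ([x^{|n|},y^{|m|}])` for nonzero integers `n, m`. -/
theorem trace_commutator_abs (n m : ℤ) (hn : n ≠ 0) (hm : m ≠ 0) (x y : SL2C) :
    tr2 (x ^ n * y ^ m * x ^ (-n) * y ^ (-m)) =
      tr2 (x ^ |n| * y ^ |m| * x ^ (-|n|) * y ^ (-|m|)) := by
  simpa only [tr2, _root_.zpow_neg, ← commutatorElement_def, ← map_zpow, ← map_commutatorElement,
    SpecialLinearGroup.coe_GL_coe_matrix] using
    trace_commutator_abs_general n m (SpecialLinearGroup.toGL x) (SpecialLinearGroup.toGL y)
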